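/- Let N = 9 and let B be the open unit ball in ℝ⁹. Define on (0,1) the functions φ(r) := r^{−7/2} + r − 1.9 and ψ(r) := r^{−5/2} + 20r^{−1.69} + 10r^{−1} + 10r + 7r² − 48, and set P(r) := −(φ''(r) + (8/r)φ'(r))/φ(r) and Q(r) := −(ψ''(r) + (6/r)ψ'(r))/ψ(r). Then for every u ∈ C_c^∞(B), ∫_B (Δu)² dx ≥ ∫_B Q(|x|)(P(|x|) + 8/|x|²) u(x)² dx. -/

import Mathlib

open MeasureTheory Metric Set Filter

/-- The Laplacian of `u : ℝ^N → ℝ`, as the sum of pure second partial derivatives. -/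
noncomputable def lap {N : ℕ} (u : EuclideanSpace ℝ (Fin N) → ℝ) (x : EuclideanSpace ℝ (Fin N)) : ℝ :=
  ∑ i : Fin N, fderiv ℝ (fun y => fderiv ℝ u y (EuclideanSpace.single i 1)) x
    (EuclideanSpace.single i 1)

/-- The biharmonic operator `Δ²`. -/
noncomputable def biharm {N : ℕ} (u : EuclideanSpace ℝ (Fin N) → ℝ)
    (x : EuclideanSpace ℝ (Fin N)) : ℝ :=
  lap (lap u) x

/-- The radial profile `φ(r) = r^{-7/2} + r - 1.9` (here `N = 9`). -/
noncomputable def phiFun (r : ℝ) : ℝ := r ^ (-(7 : ℝ) / 2) + r - 1.9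

/-- The radial profile `ψ(r) = r^{-5/2} + 20 r^{-1.69} + 10 r⁻¹ + 10 r + 7 r² - 48`. -/
noncomputable def psiFun (r : ℝ) : ℝ :=
  r ^ (-(5 : ℝ) / 2) + 20 * r ^ (-(1.69 : ℝ)) + 10 * r⁻¹ + 10 * r + 7 * r ^ 2 - 48

/-- `P(r) = -(φ''(r) + (8/r) φ'(r)) / φ(r)`. -/
noncomputable def Pfun (r : ℝ) : ℝ :=
  -(deriv (deriv phiFun) r + (8 / r) * deriv phiFun r) / phiFun r

/-- `Q(r) = -(ψ''(r) + (6/r) ψ'(r)) / ψ(r)`. -/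
noncomputable def Qfun (r : ℝ) : ℝ :=
  -(deriv (deriv psiFun) r + (6 / r) * deriv psiFun r) / psiFun r

open Topology

noncomputable def dA (r : ℝ) : ℝ := 1 + r ^ (4.5 : ℝ) - 1.9 * r ^ (3.5 : ℝ)
noncomputable def aA (r : ℝ) : ℝ := (-3.5 + r ^ (4.5 : ℝ)) / dA r
noncomputable def wA (r : ℝ) : ℝ := 8 + (12.25 - 8 * r ^ (4.5 : ℝ)) / dA r
noncomputable def dB (r : ℝ) : ℝ := 1 + 20 * r ^ (0.81 : ℝ) + 10 * r ^ (1.5 : ℝ)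
  + 10 * r ^ (3.5 : ℝ) + 7 * r ^ (4.5 : ℝ) - 48 * r ^ (2.5 : ℝ)
noncomputable def bB (r : ℝ) : ℝ := (-2.5 - 33.8 * r ^ (0.81 : ℝ) - 10 * r ^ (1.5 : ℝ)
  + 10 * r ^ (3.5 : ℝ) + 14 * r ^ (4.5 : ℝ)) / dB r

lemma rp_mul {r : ℝ} (hr : 0 < r) (a b c : ℝ) (h : a + b = c) : r ^ a * r ^ b = r ^ c := by
  rw [← Real.rpow_add hr, h]

lemma rp_sq {r : ℝ} (hr : 0 < r) (a c : ℝ) (h : a + 2 = c) : r ^ a * r ^ 2 = r ^ c := by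
  rw [← Real.rpow_natCast r 2, ← Real.rpow_add hr, ← h]; norm_num

lemma rp_one {r : ℝ} (hr : 0 < r) (a c : ℝ) (h : a + 1 = c) : r ^ a * r = r ^ c := by
  rw [← h, Real.rpow_add_one hr.ne']

/-- derivative values of φ -/
noncomputable def ph1 (r : ℝ) : ℝ := -3.5 * r ^ (-4.5 : ℝ) + 1
noncomputable def ph2 (r : ℝ) : ℝ := 15.75 * r ^ (-5.5 : ℝ)
noncomputable def ps1 (r : ℝ) : ℝ :=
  -2.5 * r ^ (-3.5 : ℝ) - 33.8 * r ^ (-2.69 : ℝ) - 10 * r ^ (-2 : ℝ) + 10 + 14 * r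
noncomputable def ps2 (r : ℝ) : ℝ :=
  8.75 * r ^ (-4.5 : ℝ) + 90.922 * r ^ (-3.69 : ℝ) + 20 * r ^ (-3 : ℝ) + 14

lemma hd_rpow {r : ℝ} (hr : 0 < r) (p q c : ℝ) (h : p - 1 = q) :
    HasDerivAt (fun r : ℝ => c * r ^ p) (c * (p * r ^ q)) r := by
  subst h
  exact (Real.hasDerivAt_rpow_const (Or.inl hr.ne')).const_mul c

lemma phi_hd {r : ℝ} (hr : 0 < r) : HasDerivAt phiFun (ph1 r) r := by
  have h := (((hd_rpow hr (-(7 : ℝ) / 2) (-4.5) 1 (by norm_num)).add (hasDerivAt_id r)).sub_const (1.9 : ℝ))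
  refine (h.congr_of_eventuallyEq (Eventually.of_forall fun x => ?_)).congr_deriv ?_
  · simp [phiFun]
  · simp [ph1]; norm_num

lemma ph1_hd {r : ℝ} (hr : 0 < r) : HasDerivAt ph1 (ph2 r) r := by
  have h := ((hd_rpow hr (-4.5) (-5.5) (-3.5) (by norm_num)).add_const (1 : ℝ))
  refine (h.congr_of_eventuallyEq (Eventually.of_forall fun x => ?_)).congr_deriv ?_
  · simp [ph1]
  · simp [ph2]; ring

lemma psi_hd {r : ℝ} (hr : 0 < r) : HasDerivAt psiFun (ps1 r) r := by
  have h := ((((((hd_rpow hr (-(5 : ℝ) / 2) (-3.5) 1 (by norm_num)).add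
    (hd_rpow hr (-1.69) (-2.69) 20 (by norm_num))).add
    (hd_rpow hr (-1) (-2) 10 (by norm_num))).add
    (hd_rpow hr 1 0 10 (by norm_num))).add
    (hd_rpow hr 2 1 7 (by norm_num))).sub_const (48 : ℝ))
  refine (h.congr_of_eventuallyEq (Eventually.of_forall fun x => ?_)).congr_deriv ?_
  · simp [psiFun, Real.rpow_neg_one]
  · simp only [ps1, Real.rpow_zero, Real.rpow_one]; ring

lemma ps1_hd {r : ℝ} (hr : 0 < r) : HasDerivAt ps1 (ps2 r) r := by
  have h := (((((hd_rpow hr (-3.5) (-4.5) (-2.5) (by norm_num)).sub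
    (hd_rpow hr (-2.69) (-3.69) 33.8 (by norm_num))).sub
    (hd_rpow hr (-2) (-3) 10 (by norm_num))).add_const (10 : ℝ)).add
    (hd_rpow hr 1 0 14 (by norm_num)))
  refine (h.congr_of_eventuallyEq (Eventually.of_forall fun x => ?_)).congr_deriv ?_
  · simp [ps1]
  · simp only [ps2, Real.rpow_zero]; ring

lemma Pfun_eq {r : ℝ} (hr : 0 < r) : Pfun r = -(ph2 r + (8 / r) * ph1 r) / phiFun r := by
  have h : deriv phiFun =ᶠ[𝓝 r] ph1 := by
    filter_upwards [lt_mem_nhds hr] with x hx using (phi_hd hx).deriv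
  rw [Pfun, (phi_hd hr).deriv, h.deriv_eq, (ph1_hd hr).deriv]

lemma Qfun_eq {r : ℝ} (hr : 0 < r) : Qfun r = -(ps2 r + (6 / r) * ps1 r) / psiFun r := by
  have h : deriv psiFun =ᶠ[𝓝 r] ps1 := by
    filter_upwards [lt_mem_nhds hr] with x hx using (psi_hd hx).deriv
  rw [Qfun, (psi_hd hr).deriv, h.deriv_eq, (ps1_hd hr).deriv]

lemma inv_ge {r : ℝ} (hr : 0 < r) : 2 - r ≤ r⁻¹ := by
  have h : r * r⁻¹ = 1 := mul_inv_cancel₀ hr.ne'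
  have h2 : 0 < r⁻¹ := by positivity
  nlinarith [mul_nonneg h2.le (sq_nonneg (r - 1))]

lemma rpneg_ge {r : ℝ} (hr : 0 < r) (h1 : r < 1) (p : ℝ) (hp : p ≤ -1) : r⁻¹ ≤ r ^ p := by
  rw [← Real.rpow_neg_one]
  exact Real.rpow_le_rpow_of_exponent_ge hr h1.le hp

lemma phi_pos {r : ℝ} (hr : 0 < r) (h1 : r < 1) : 0 < phiFun r := by
  have := inv_ge hr
  have := rpneg_ge hr h1 (-(7 : ℝ) / 2) (by norm_num)
  unfold phiFun; norm_num; linarith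

lemma psi_pos {r : ℝ} (hr : 0 < r) (h1 : r < 1) : 0 < psiFun r := by
  have := inv_ge hr
  have := rpneg_ge hr h1 (-(5 : ℝ) / 2) (by norm_num)
  have := rpneg_ge hr h1 (-(1.69 : ℝ)) (by norm_num)
  unfold psiFun; nlinarith

lemma ps1_neg {r : ℝ} (hr : 0 < r) (h1 : r < 1) : ps1 r ≤ 0 := by
  have := Real.one_le_rpow_of_pos_of_le_one_of_nonpos hr h1.le (z := -3.5) (by norm_num)
  have := Real.one_le_rpow_of_pos_of_le_one_of_nonpos hr h1.le (z := -2.69) (by norm_num)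
  have := Real.one_le_rpow_of_pos_of_le_one_of_nonpos hr h1.le (z := -2) (by norm_num)
  unfold ps1; linarith

lemma dA_eq {r : ℝ} (hr : 0 < r) : dA r = r ^ (3.5 : ℝ) * phiFun r := by
  have h1 := rp_mul hr 3.5 (-(7 : ℝ) / 2) 0 (by norm_num)
  have h2 := rp_one hr 3.5 4.5 (by norm_num)
  rw [Real.rpow_zero] at h1
  simp only [dA, phiFun]; linear_combination -h1 - h2

lemma dB_eq {r : ℝ} (hr : 0 < r) : dB r = r ^ (2.5 : ℝ) * psiFun r := by
  have h1 := rp_mul hr 2.5 (-(5 : ℝ) / 2) 0 (by norm_num)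
  have h2 := rp_mul hr 2.5 (-(1.69 : ℝ)) 0.81 (by norm_num)
  have h3 := rp_mul hr 2.5 (-1) 1.5 (by norm_num)
  have h4 := rp_one hr 2.5 3.5 (by norm_num)
  have h5 := rp_sq hr 2.5 4.5 (by norm_num)
  rw [Real.rpow_zero] at h1
  rw [Real.rpow_neg_one] at h3
  simp only [dB, psiFun]; linear_combination -h1 - 20 * h2 - 10 * h3 - 10 * h4 - 7 * h5

lemma dA_pos {r : ℝ} (hr : 0 ≤ r) (h1 : r < 1) : 0 < dA r := by
  rcases hr.eq_or_lt with rfl | hr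
  · simp [dA]; norm_num
  · rw [dA_eq hr]; exact mul_pos (Real.rpow_pos_of_pos hr _) (phi_pos hr h1)

lemma dB_pos {r : ℝ} (hr : 0 ≤ r) (h1 : r < 1) : 0 < dB r := by
  rcases hr.eq_or_lt with rfl | hr
  · simp [dB]; norm_num
  · rw [dB_eq hr]; exact mul_pos (Real.rpow_pos_of_pos hr _) (psi_pos hr h1)

lemma aA_eq {r : ℝ} (hr : 0 < r) : aA r = r * ph1 r / phiFun r := by
  have h1 := rp_mul hr 3.5 (-4.5) (-1) (by norm_num)
  have h2 := rp_one hr 3.5 4.5 (by norm_num)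
  rw [Real.rpow_neg_one] at h1
  have h0 : r⁻¹ * r = 1 := inv_mul_cancel₀ hr.ne'
  have h3 : (r : ℝ) ^ (3.5 : ℝ) ≠ 0 := (Real.rpow_pos_of_pos hr _).ne'
  rw [aA, dA_eq hr, ← mul_div_mul_left _ (phiFun r) h3]
  congr 1
  simp only [ph1]; linear_combination (3.5 * r) * h1 + 3.5 * h0 - h2

lemma wA_eq {r : ℝ} (hr : 0 < r) : wA r = 8 + r ^ 2 * Pfun r := by
  have h1 := rp_mul hr 3.5 (-4.5) (-1) (by norm_num)
  have h1' := rp_mul hr 3.5 (-5.5) (-2) (by norm_num)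
  have h1'' := rp_sq hr (-2) 0 (by norm_num)
  have h2 := rp_one hr 3.5 4.5 (by norm_num)
  rw [Real.rpow_neg_one] at h1
  rw [Real.rpow_zero] at h1''
  have h0 : r⁻¹ * r = 1 := inv_mul_cancel₀ hr.ne'
  have h3 : (r : ℝ) ^ (3.5 : ℝ) ≠ 0 := (Real.rpow_pos_of_pos hr _).ne'
  rw [wA, dA_eq hr, Pfun_eq hr, ← mul_div_assoc, ← mul_div_mul_left _ (phiFun r) h3]
  congr 2
  have : r ^ 2 * -(ph2 r + 8 / r * ph1 r) = - r ^ 2 * ph2 r - 8 * r * ph1 r := by field_simp; ring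
  rw [this]
  simp only [ph1, ph2]
  linear_combination (15.75 * r^2) * h1' + 15.75 * h1'' - 28 * r * h1 - 28 * h0 + 8 * h2

lemma bB_eq {r : ℝ} (hr : 0 < r) : bB r = r * ps1 r / psiFun r := by
  have h1 := rp_mul hr 2.5 (-3.5) (-1) (by norm_num)
  have h2 := rp_mul hr 2.5 (-2.69) (-0.19) (by norm_num)
  have h2' := rp_one hr (-0.19) (0.81) (by norm_num)
  have h3 := rp_mul hr 2.5 (-2) 0.5 (by norm_num)
  have h3' := rp_one hr (0.5) (1.5) (by norm_num)
  have h4 := rp_one hr 2.5 3.5 (by norm_num)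
  have h5 := rp_sq hr 2.5 4.5 (by norm_num)
  rw [Real.rpow_neg_one] at h1
  have h0 : r⁻¹ * r = 1 := inv_mul_cancel₀ hr.ne'
  have h6 : (r : ℝ) ^ (2.5 : ℝ) ≠ 0 := (Real.rpow_pos_of_pos hr _).ne'
  rw [bB, dB_eq hr, ← mul_div_mul_left _ (psiFun r) h6]
  congr 1
  simp only [ps1]
  linear_combination (2.5 * r) * h1 + 2.5 * h0 + (33.8 * r) * h2 + 33.8 * h2' + (10 * r) * h3
    + 10 * h3' - 10 * h4 - 14 * h5

lemma aA_hd {r : ℝ} (hr : 0 < r) (h1 : r < 1) :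
    ∃ a', HasDerivAt aA a' r ∧ r ^ 2 * Pfun r = -(r * a' + aA r ^ 2 + 7 * aA r) := by
  have hp := (phi_pos hr h1).ne'
  have h := ((hasDerivAt_id r).mul (ph1_hd hr)).div (phi_hd hr) hp
  refine ⟨_, h.congr_of_eventuallyEq ?_, ?_⟩
  · filter_upwards [lt_mem_nhds hr] with x hx
    simp [aA_eq hx]
  · rw [aA_eq hr, Pfun_eq hr]
    simp only [id, Pi.mul_apply]
    field_simp
    ring

lemma bB_hd {r : ℝ} (hr : 0 < r) (h1 : r < 1) :
    ∃ b', HasDerivAt bB b' r ∧ r ^ 2 * Qfun r = -(r * b' + bB r ^ 2 + 5 * bB r) := by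
  have hp := (psi_pos hr h1).ne'
  have h := ((hasDerivAt_id r).mul (ps1_hd hr)).div (psi_hd hr) hp
  refine ⟨_, h.congr_of_eventuallyEq ?_, ?_⟩
  · filter_upwards [lt_mem_nhds hr] with x hx
    simp [bB_eq hx]
  · rw [bB_eq hr, Qfun_eq hr]
    simp only [id, Pi.mul_apply]
    field_simp
    ring

lemma bB_nonpos {r : ℝ} (hr : 0 < r) (h1 : r < 1) : bB r ≤ 0 := by
  rw [bB_eq hr]
  exact div_nonpos_of_nonpos_of_nonneg (mul_nonpos_of_nonneg_of_nonpos hr.le (ps1_neg hr h1))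
    (psi_pos hr h1).le

lemma wA_pos {r : ℝ} (hr : 0 < r) (h1 : r < 1) : 0 < wA r := by
  have h2 := Real.rpow_le_one hr.le h1.le (z := 4.5) (by norm_num)
  have := div_pos (show 0 < 12.25 - 8 * r ^ (4.5 : ℝ) by linarith) (dA_pos hr.le h1)
  unfold wA; linarith

lemma wA_hd {r : ℝ} (hr : 0 < r) (h1 : r < 1) : ∃ w', HasDerivAt wA w' r ∧ 0 ≤ w' := by
  have hp := (dA_pos hr.le h1).ne'
  have hd : HasDerivAt dA (1 * (4.5 * r ^ (3.5 : ℝ)) - 1.9 * (3.5 * r ^ (2.5 : ℝ))) r := by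
    refine ((((hd_rpow hr 4.5 3.5 1 (by norm_num)).const_add 1).sub
      (hd_rpow hr 3.5 2.5 1.9 (by norm_num))).congr_of_eventuallyEq
        (Eventually.of_forall fun x => ?_))
    simp [dA]
  have hn := (hd_rpow hr 4.5 3.5 8 (by norm_num)).const_sub 12.25
  refine ⟨_, (hn.div hd hp).const_add 8, ?_⟩
  refine div_nonneg ?_ (sq_nonneg _)
  have e1 := rp_one hr 2.5 3.5 (by norm_num)
  have e2 := rp_one hr 3.5 4.5 (by norm_num)
  have hb : r ^ (5 : ℝ) ≤ r ^ (4.5 : ℝ) := 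
    Real.rpow_le_rpow_of_exponent_ge hr h1.le (by norm_num)
  have hb' : 5 * r - 4 ≤ r ^ (5 : ℝ) := by
    have : r ^ (5 : ℝ) = r ^ 5 := by norm_cast
    rw [this]
    have := one_add_mul_le_pow (a := r - 1) (by linarith) 5
    norm_num at this; linarith
  have key : 0 ≤ r ^ (2.5 : ℝ) * (81.4625 - 91.125 * r + 15.2 * r ^ (4.5 : ℝ)) :=
    mul_nonneg (Real.rpow_pos_of_pos hr _).le (by linarith)
  refine key.trans_eq ?_
  simp only [dA, ← e2, ← e1]
  ring

lemma contOn_rpow {s : Set ℝ} (p : ℝ) (hp : 0 ≤ p) : ContinuousOn (fun r : ℝ => r ^ p) s :=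
  (Real.continuous_rpow_const hp).continuousOn

lemma aA_cont {ρ : ℝ} (hρ : ρ < 1) : ContinuousOn aA (Icc 0 ρ) := by
  have := contOn_rpow (s := Icc 0 ρ) 4.5 (by norm_num)
  have := contOn_rpow (s := Icc 0 ρ) 3.5 (by norm_num)
  unfold aA
  refine ContinuousOn.div (by fun_prop) (by unfold dA; fun_prop) ?_
  intro x hx; exact (dA_pos hx.1 (hx.2.trans_lt hρ)).ne'

lemma wA_cont {ρ : ℝ} (hρ : ρ < 1) : ContinuousOn wA (Icc 0 ρ) := by
  have := contOn_rpow (s := Icc 0 ρ) 4.5 (by norm_num)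
  have := contOn_rpow (s := Icc 0 ρ) 3.5 (by norm_num)
  unfold wA
  refine continuousOn_const.add (ContinuousOn.div (by fun_prop) (by unfold dA; fun_prop) ?_)
  intro x hx; exact (dA_pos hx.1 (hx.2.trans_lt hρ)).ne'

lemma bB_cont {ρ : ℝ} (hρ : ρ < 1) : ContinuousOn bB (Icc 0 ρ) := by
  have := contOn_rpow (s := Icc 0 ρ) 4.5 (by norm_num)
  have := contOn_rpow (s := Icc 0 ρ) 3.5 (by norm_num)
  have := contOn_rpow (s := Icc 0 ρ) 2.5 (by norm_num)
  have := contOn_rpow (s := Icc 0 ρ) 1.5 (by norm_num)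
  have := contOn_rpow (s := Icc 0 ρ) 0.81 (by norm_num)
  unfold bB
  refine ContinuousOn.div (by fun_prop) (by unfold dB; fun_prop) ?_
  intro x hx; exact (dB_pos hx.1 (hx.2.trans_lt hρ)).ne'

/-- One-dimensional inequality along a ray. -/
lemma ray_main {ρ : ℝ} (hρ : ρ < 1) (f f1 f2 : ℝ → ℝ) (hf : ∀ r, HasDerivAt f (f1 r) r)
    (hf1 : ∀ r, HasDerivAt f1 (f2 r) r) (h0 : f ρ = 0) (h01 : f1 ρ = 0) :
    ∃ Φ Φ' : ℝ → ℝ, ContinuousOn Φ (Icc 0 ρ) ∧ Φ 0 = 0 ∧ Φ ρ = 0 ∧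
      (∀ r ∈ Ioo 0 ρ, HasDerivAt Φ (Φ' r) r) ∧
      ∀ r ∈ Ioo 0 ρ, Φ' r ≤ r ^ 8 * ((f2 r + 8 / r * f1 r) ^ 2
        - Qfun r * (Pfun r + 8 / r ^ 2) * f r ^ 2) := by
  have key : ∀ r ∈ Ioo 0 ρ, ∃ y, HasDerivAt
      (fun r => r ^ 7 * (8 + aA r) * f1 r ^ 2 + r ^ 5 * (wA r * bB r) * f r ^ 2) y r ∧
      y ≤ r ^ 8 * ((f2 r + 8 / r * f1 r) ^ 2 - Qfun r * (Pfun r + 8 / r ^ 2) * f r ^ 2) := by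
    rintro r ⟨hr, hr'⟩
    have h1 := hr'.trans hρ
    obtain ⟨a', ha, hP⟩ := aA_hd hr h1
    obtain ⟨b', hb, hQ⟩ := bB_hd hr h1
    obtain ⟨w', hw, hw'⟩ := wA_hd hr h1
    have hbn := bB_nonpos hr h1
    have hwp := wA_pos hr h1
    have hwe := wA_eq hr
    refine ⟨_, (((hasDerivAt_pow 7 r).mul (ha.const_add 8)).mul ((hf1 r).pow 2)).add
      (((hasDerivAt_pow 5 r).mul (hw.mul hb)).mul ((hf r).pow 2)), ?_⟩
    have e : r ^ 8 * ((f2 r + 8 / r * f1 r) ^ 2 - Qfun r * (Pfun r + 8 / r ^ 2) * f r ^ 2)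
        = (r ^ 4 * f2 r + 8 * r ^ 3 * f1 r) ^ 2
          - r ^ 4 * (r ^ 2 * Qfun r) * (8 + r ^ 2 * Pfun r) * f r ^ 2 := by
      field_simp; ring
    rw [e, ← hwe, hQ]
    have hwa : wA r = 8 - (r * a' + aA r ^ 2 + 7 * aA r) := by rw [hwe, hP]; ring
    have s1 := sq_nonneg (r ^ 4 * f2 r - r ^ 3 * aA r * f1 r)
    have s2 := mul_nonneg hwp.le (sq_nonneg (r ^ 3 * f1 r - r ^ 2 * bB r * f r))
    have s3 : 0 ≤ r ^ 5 * w' * (-bB r) * f r ^ 2 := by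
      have : 0 ≤ -bB r := by linarith
      positivity
    simp only [Pi.mul_apply, Pi.pow_apply]
    push_cast
    have hid : (r ^ 6 * f1 r ^ 2) * wA r
      = (r ^ 6 * f1 r ^ 2) * (8 - (r * a' + aA r ^ 2 + 7 * aA r)) := by rw [hwa]
    norm_num
    linarith
  have key' : ∀ r, ∃ y, r ∈ Ioo 0 ρ → HasDerivAt
      (fun r => r ^ 7 * (8 + aA r) * f1 r ^ 2 + r ^ 5 * (wA r * bB r) * f r ^ 2) y r ∧
      y ≤ r ^ 8 * ((f2 r + 8 / r * f1 r) ^ 2 - Qfun r * (Pfun r + 8 / r ^ 2) * f r ^ 2) := by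
    intro r
    by_cases h : r ∈ Ioo 0 ρ
    · obtain ⟨y, hy⟩ := key r h; exact ⟨y, fun _ => hy⟩
    · exact ⟨0, fun h' => absurd h' h⟩
  choose Φ' hΦ using key'
  refine ⟨_, Φ', ?_, ?_, ?_, fun r hr => (hΦ r hr).1, fun r hr => (hΦ r hr).2⟩
  · have c1 : Continuous f := continuous_iff_continuousAt.2 fun r => (hf r).continuousAt
    have c2 : Continuous f1 := continuous_iff_continuousAt.2 fun r => (hf1 r).continuousAt
    have := aA_cont hρ
    have := bB_cont hρ
    have := wA_cont hρ
    fun_prop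
  · simp
  · simp [h0, h01]

abbrev E9 := EuclideanSpace ℝ (Fin 9)

lemma polar_nonneg (F : E9 → ℝ) (hF : Integrable F)
    (h : ∀ ω : E9, ‖ω‖ = 1 → IntegrableOn (fun r : ℝ => r ^ 8 * F (r • ω)) (Ioi 0) →
      0 ≤ ∫ r in Ioi (0 : ℝ), r ^ 8 * F (r • ω)) : 0 ≤ ∫ x, F x := by
  set μ : Measure E9 := volume with hμ
  have hmp := μ.measurePreserving_homeomorphUnitSphereProd
  have hdim : Module.finrank ℝ E9 - 1 = 8 := by simp [E9]
  rw [hdim] at hmp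
  let G : sphere (0 : E9) 1 × Ioi (0 : ℝ) → ℝ := fun p => F (p.2.1 • p.1.1)
  have hG : ∀ x : ({0}ᶜ : Set E9), G (homeomorphUnitSphereProd E9 x) = F x := by
    intro x
    have : ((homeomorphUnitSphereProd E9).symm (homeomorphUnitSphereProd E9 x)).1 = x.1 := by
      rw [Homeomorph.symm_apply_apply]
    rw [homeomorphUnitSphereProd_symm_apply_coe] at this
    simp only [G, this]
  have hint : Integrable G (μ.toSphere.prod (.volumeIoiPow 8)) := by
    rw [← hmp.integrable_comp_emb (Homeomorph.measurableEmbedding _)]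
    have : G ∘ (homeomorphUnitSphereProd E9) = F ∘ Subtype.val := funext hG
    rw [this, ← integrableOn_iff_comap_subtypeVal (by measurability)]
    exact hF.integrableOn
  have e1 : ∫ x, F x ∂μ = ∫ p, G p ∂(μ.toSphere.prod (.volumeIoiPow 8)) := by
    rw [← hmp.integral_comp (Homeomorph.measurableEmbedding _)]
    simp_rw [hG]
    rw [integral_subtype_comap (measurableSet_singleton _).compl fun x ↦ F x,
        restrict_compl_singleton]
  rw [e1, integral_prod _ hint]
  apply integral_nonneg_of_ae
  filter_upwards [hint.prod_right_ae] with ω hω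
  have e2 : ∫ r, G (ω, r) ∂(Measure.volumeIoiPow 8) = ∫ r in Ioi (0 : ℝ), r ^ 8 * F (r • ω.1) := by
    simp only [Measure.volumeIoiPow, ENNReal.ofReal]
    rw [integral_withDensity_eq_integral_smul,
        integral_subtype_comap measurableSet_Ioi fun a ↦ Real.toNNReal (a ^ 8) • F (a • ω.1),
        setIntegral_congr_fun measurableSet_Ioi fun x hx ↦ ?_]
    · rw [NNReal.smul_def, Real.coe_toNNReal _ (pow_nonneg hx.out.le _), smul_eq_mul]
    · exact (measurable_subtype_coe.pow_const _).real_toNNReal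
  simp only [Pi.zero_apply]
  rw [e2]
  refine h ω.1 (by simp) ?_
  rw [integrableOn_iff_comap_subtypeVal measurableSet_Ioi]
  rw [Measure.volumeIoiPow, integrable_withDensity_iff_integrable_smul' (by fun_prop) (by simp)] at hω
  refine hω.congr (.of_forall ?_)
  rintro ⟨x, hx : 0 < x⟩
  simp (disch := positivity) [ENNReal.toReal_ofReal, G]

lemma polar_ray {ρ : ℝ} (hρ0 : 0 < ρ) (F : E9 → ℝ) (hF : Integrable F)
    (hz : ∀ x, ρ ≤ ‖x‖ → F x = 0)
    (h : ∀ ω : E9, ‖ω‖ = 1 → ∃ Φ Φ' : ℝ → ℝ, ContinuousOn Φ (Icc 0 ρ) ∧ Φ 0 = 0 ∧ Φ ρ = 0 ∧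
      (∀ r ∈ Ioo 0 ρ, HasDerivAt Φ (Φ' r) r) ∧
      ∀ r ∈ Ioo 0 ρ, Φ' r ≤ r ^ 8 * F (r • ω)) : 0 ≤ ∫ x, F x := by
  refine polar_nonneg F hF fun ω hω hi => ?_
  obtain ⟨Φ, Φ', hc, h0, h1, hd, hle⟩ := h ω hω
  have e : ∫ r in Ioi (0 : ℝ), r ^ 8 * F (r • ω) = ∫ r in (0 : ℝ)..ρ, r ^ 8 * F (r • ω) := by
    rw [intervalIntegral.integral_of_le hρ0.le]
    refine setIntegral_eq_of_subset_of_forall_sdiff_eq_zero measurableSet_Ioi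
      (fun x hx => hx.1) ?_
    rintro x ⟨hx, hx'⟩
    have hx : 0 < x := hx
    have : ρ ≤ ‖x • ω‖ := by
      rw [norm_smul, hω, Real.norm_of_nonneg hx.le, mul_one]
      by_contra hh
      exact hx' ⟨hx, (not_le.1 hh).le⟩
    simp [hz _ this]
  rw [e]
  have := intervalIntegral.sub_le_integral_of_hasDeriv_right_of_le hρ0.le hc
    (fun x hx => (hd x hx).hasDerivWithinAt) (φ := fun r => r ^ 8 * F (r • ω))
    ((integrableOn_Icc_iff_integrableOn_Ioc).2 (hi.mono_set fun x hx => hx.1)) hle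
  rw [h0, h1] at this
  linarith

/-- `r^{-4}` weight is integrable against continuous compactly supported functions. -/
lemma int_w (h : E9 → ℝ) (hc : Continuous h) (hs : HasCompactSupport h) :
    Integrable (fun x => (‖x‖ ^ 4)⁻¹ * h x) := by
  obtain ⟨R, hR⟩ := hs.isCompact.isBounded.subset_ball (0 : E9)
  obtain ⟨C, hC⟩ := hc.bounded_above_of_compact_support hs
  have h1 : IntegrableOn (fun x : E9 => (‖x‖ ^ 4)⁻¹) (ball 0 R) := by
    rw [integrableOn_fun_norm_addHaar volume (f := fun y => (y ^ 4)⁻¹)]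
    have : IntegrableOn (fun y : ℝ => y ^ 4) (Ioo 0 R) :=
      ((continuous_pow 4).integrableOn_Icc (a := 0) (b := R)).mono_set Ioo_subset_Icc_self
    refine this.congr_fun ?_ measurableSet_Ioo
    intro y hy
    have := hy.1.ne'
    simp
    field_simp
  have h2 : IntegrableOn (fun x : E9 => (‖x‖ ^ 4)⁻¹ * h x) (ball 0 R) := by
    refine Integrable.mul_bdd h1 hc.aestronglyMeasurable.restrict (.of_forall hC)
  refine (integrableOn_iff_integrable_of_support_subset ?_).1 h2
  intro x hx
  apply hR
  apply subset_tsupport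
  intro h0
  simp [h0] at hx

open scoped ContDiff

lemma two_le_inf : minSmoothness ℝ 2 ≤ (∞ : WithTop ℕ∞) := by
  rw [minSmoothness_of_isRCLikeNormedField]
  exact WithTop.coe_le_coe.2 le_top

noncomputable def LD (A : E9 →L[ℝ] E9) (u : E9 → ℝ) (x : E9) : ℝ := fderiv ℝ u x (A x)

lemma LD_smooth (A : E9 →L[ℝ] E9) {u : E9 → ℝ} (hu : ContDiff ℝ ∞ u) : ContDiff ℝ ∞ (LD A u) := by
  unfold LD
  exact (hu.fderiv_right (m := ∞) (by simp)).clm_apply A.contDiff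

lemma fderiv_zero_of_not_mem {u : E9 → ℝ} {x : E9} (hx : x ∉ tsupport u) : fderiv ℝ u x = 0 := by
  have := tsupport_fderiv_subset ℝ (f := u)
  exact image_eq_zero_of_notMem_tsupport fun h => hx (this h)

lemma LD_tsupp (A : E9 →L[ℝ] E9) (u : E9 → ℝ) : tsupport (LD A u) ⊆ tsupport u := by
  refine closure_minimal ?_ (isClosed_tsupport u)
  intro x hx
  by_contra h
  exact hx (by simp [LD, fderiv_zero_of_not_mem h])

lemma LD_cs (A : E9 →L[ℝ] E9) {u : E9 → ℝ} (hu : HasCompactSupport u) :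
    HasCompactSupport (LD A u) :=
  IsCompact.of_isClosed_subset hu (isClosed_tsupport _) (LD_tsupp A u)

lemma diff2 {u : E9 → ℝ} (hu : ContDiff ℝ ∞ u) : Differentiable ℝ (fderiv ℝ u) :=
  (hu.fderiv_right (m := ∞) (by simp)).differentiable (by simp)

lemma LD_LD (A B : E9 →L[ℝ] E9) {u : E9 → ℝ} (hu : ContDiff ℝ ∞ u) (x : E9) :
    LD A (LD B u) x = fderiv ℝ (fderiv ℝ u) x (A x) (B x) + fderiv ℝ u x (B (A x)) := by
  have h := ((diff2 hu x).hasFDerivAt).clm_apply (B.hasFDerivAt (x := x))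
  have : fderiv ℝ (LD B u) x = _ := h.fderiv
  rw [LD, this]
  simp [add_comm]

lemma LD_comm (A : E9 →L[ℝ] E9) {u : E9 → ℝ} (hu : ContDiff ℝ ∞ u) :
    LD A (LD (.id ℝ E9) u) = LD (.id ℝ E9) (LD A u) := by
  funext x
  rw [LD_LD _ _ hu, LD_LD _ _ hu]
  have : IsSymmSndFDerivAt ℝ u x := hu.contDiffAt.isSymmSndFDerivAt two_le_inf
  rw [this.eq]
  simp

lemma LD_mul (A : E9 →L[ℝ] E9) {u v : E9 → ℝ} (hu : ContDiff ℝ ∞ u) (hv : ContDiff ℝ ∞ v) (x : E9) :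
    LD A (fun y => u y * v y) x = u x * LD A v x + v x * LD A u x := by
  unfold LD
  rw [fderiv_fun_mul (hu.differentiable (by simp) x) (hv.differentiable (by simp) x)]
  simp

noncomputable def Dop (u : E9 → ℝ) (x : E9) : ℝ :=
  LD (.id ℝ E9) (LD (.id ℝ E9) u) x + 7 * LD (.id ℝ E9) u x

lemma Dop_smooth {u : E9 → ℝ} (hu : ContDiff ℝ ∞ u) : ContDiff ℝ ∞ (Dop u) :=
  (LD_smooth _ (LD_smooth _ hu)).add (contDiff_const.mul (LD_smooth _ hu))

lemma Dop_zero {u : E9 → ℝ} {x : E9} (hx : x ∉ tsupport u) : Dop u x = 0 := by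
  have h1 : x ∉ tsupport (LD (.id ℝ E9) u) := fun h => hx (LD_tsupp _ _ h)
  have h2 : x ∉ tsupport (LD (.id ℝ E9) (LD (.id ℝ E9) u)) := fun h => h1 (LD_tsupp _ _ h)
  rw [Dop, image_eq_zero_of_notMem_tsupport h1, image_eq_zero_of_notMem_tsupport h2]; simp

lemma LD_Dop (A : E9 →L[ℝ] E9) {u : E9 → ℝ} (hu : ContDiff ℝ ∞ u) (x : E9) :
    LD A (Dop u) x = Dop (LD A u) x := by
  have h1 := LD_smooth (.id ℝ E9) hu
  have h2 := LD_smooth (.id ℝ E9) h1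
  have : LD A (Dop u) x = LD A (LD (.id ℝ E9) (LD (.id ℝ E9) u)) x
      + 7 * LD A (LD (.id ℝ E9) u) x := by
    rw [LD]
    unfold Dop
    rw [fderiv_fun_add (h2.differentiable (by simp) x)
      ((h1.differentiable (by simp) x).const_mul 7), fderiv_const_mul (h1.differentiable (by simp) x)]
    simp [LD]
  rw [this, LD_comm A h1, LD_comm A hu]; rfl

lemma ray_d1 {u : E9 → ℝ} (hu : ContDiff ℝ ∞ u) (z : E9) (r : ℝ) :
    HasDerivAt (fun r : ℝ => u (r • z)) (fderiv ℝ u (r • z) z) r := by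
  have h1 : HasDerivAt (fun r : ℝ => r • z) z r := by
    simpa using (hasDerivAt_id r).smul_const z
  exact ((hu.differentiable (by simp) (r • z)).hasFDerivAt).comp_hasDerivAt r h1

lemma ray_d2 {u : E9 → ℝ} (hu : ContDiff ℝ ∞ u) (z : E9) (r : ℝ) :
    HasDerivAt (fun r : ℝ => fderiv ℝ u (r • z) z) (fderiv ℝ (fderiv ℝ u) (r • z) z z) r := by
  have h1 : HasDerivAt (fun r : ℝ => r • z) z r := by
    simpa using (hasDerivAt_id r).smul_const z
  have := ((diff2 hu (r • z)).hasFDerivAt).comp_hasDerivAt r h1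
  simpa using this.clm_apply (hasDerivAt_const r z)

lemma ray_Dop {u : E9 → ℝ} (hu : ContDiff ℝ ∞ u) (z : E9) (r : ℝ) :
    Dop u (r • z) = r ^ 2 * fderiv ℝ (fderiv ℝ u) (r • z) z z + 8 * r * fderiv ℝ u (r • z) z := by
  rw [Dop, LD_LD _ _ hu]
  simp [LD]
  ring

lemma cs_of {u v : E9 → ℝ} (hu : HasCompactSupport u) (h : ∀ x, x ∉ tsupport u → v x = 0) :
    HasCompactSupport v := HasCompactSupport.intro' hu (isClosed_tsupport u) (fun x hx => h x hx)

lemma not_mem_of_norm {u : E9 → ℝ} {ρ : ℝ} (h : tsupport u ⊆ ball 0 ρ) {x : E9} (hx : ρ ≤ ‖x‖) :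
    x ∉ tsupport u := fun h' => by
  have := h h'
  simp at this
  linarith

lemma norm_ray {z : E9} (hz : ‖z‖ = 1) {r : ℝ} (hr : 0 ≤ r) : ‖r • z‖ = r := by
  rw [norm_smul, hz, Real.norm_of_nonneg hr, mul_one]

lemma neg_Dop_nonneg {ρ : ℝ} (hρ0 : 0 < ρ) {v : E9 → ℝ} (hv : ContDiff ℝ ∞ v)
    (hs : HasCompactSupport v) (hsub : tsupport v ⊆ ball 0 ρ) :
    0 ≤ ∫ x, (‖x‖ ^ 4)⁻¹ * (-(Dop v x * v x)) := by
  refine polar_ray hρ0 _ (int_w _ ?_ ?_) ?_ ?_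
  · exact ((Dop_smooth hv).continuous.mul hv.continuous).neg
  · exact cs_of hs fun x hx => by simp [Dop_zero hx]
  · intro x hx
    simp [Dop_zero (not_mem_of_norm hsub hx)]
  · intro z hz
    set f : ℝ → ℝ := fun r => v (r • z)
    set f1 : ℝ → ℝ := fun r => fderiv ℝ v (r • z) z
    set f2 : ℝ → ℝ := fun r => fderiv ℝ (fderiv ℝ v) (r • z) z z
    have d1 : ∀ r, HasDerivAt f (f1 r) r := ray_d1 hv z
    have d2 : ∀ r, HasDerivAt f1 (f2 r) r := ray_d2 hv z
    have c1 : Continuous f := continuous_iff_continuousAt.2 fun r => (d1 r).continuousAt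
    have c2 : Continuous f1 := continuous_iff_continuousAt.2 fun r => (d2 r).continuousAt
    have hf0 : v (ρ • z) = 0 :=
      image_eq_zero_of_notMem_tsupport (not_mem_of_norm hsub (norm_ray hz hρ0.le).ge)
    have hf : f ρ = 0 := hf0
    refine ⟨fun r => -(r ^ 6 * (f1 r * f r) + r ^ 5 * f r ^ 2), _, by fun_prop, by simp,
      by simp [hf], fun r _ => (((hasDerivAt_pow 6 r).mul ((d2 r).mul (d1 r))).add
        ((hasDerivAt_pow 5 r).mul ((d1 r).pow 2))).neg, ?_⟩
    rintro r ⟨hr, -⟩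
    rw [norm_ray hz hr.le, ray_Dop hv]
    change _ ≤ r ^ 8 * ((r ^ 4)⁻¹ * -((r ^ 2 * f2 r + 8 * r * f1 r) * f r))
    have e : r ^ 8 * ((r ^ 4)⁻¹ * -((r ^ 2 * f2 r + 8 * r * f1 r) * f r))
      = r ^ 4 * -((r ^ 2 * f2 r + 8 * r * f1 r) * f r) := by field_simp
    rw [e]
    simp only [Pi.mul_apply, Pi.pow_apply]
    have s1 : 0 ≤ r ^ 6 * f1 r ^ 2 + 5 * r ^ 4 * f r ^ 2 := by positivity
    push_cast
    norm_num
    linarith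

noncomputable def Aij (i j : Fin 9) : E9 →L[ℝ] E9 :=
  (EuclideanSpace.proj i : E9 →L[ℝ] ℝ).smulRight (EuclideanSpace.single j (1 : ℝ))
  - (EuclideanSpace.proj j : E9 →L[ℝ] ℝ).smulRight (EuclideanSpace.single i (1 : ℝ))

lemma Aij_apply (i j : Fin 9) (x : E9) : Aij i j x =
    x i • EuclideanSpace.single j (1 : ℝ) - x j • EuclideanSpace.single i (1 : ℝ) := by
  simp [Aij]

lemma inner_Aij (i j : Fin 9) (x : E9) : inner ℝ x (Aij i j x) = 0 := by
  rw [Aij_apply]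
  simp [inner_sub_right, inner_smul_right, EuclideanSpace.inner_single_right]
  ring

lemma int_coord (i j : Fin 9) {G : E9 → ℝ} (hG : ContDiff ℝ ∞ G) (hs : HasCompactSupport G) :
    Integrable (fun x : E9 => x i * fderiv ℝ G x (EuclideanSpace.single j 1)) ∧
    ∫ x : E9, x i * fderiv ℝ G x (EuclideanSpace.single j 1) =
      - ∫ x : E9, (if i = j then 1 else 0) * G x := by
  have hc : Continuous (fun x : E9 => fderiv ℝ G x (EuclideanSpace.single j 1)) :=
    ((hG.continuous_fderiv (by simp)).clm_apply continuous_const)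
  have hi : Integrable (fun x : E9 => x i * fderiv ℝ G x (EuclideanSpace.single j 1)) := by
    refine Continuous.integrable_of_hasCompactSupport (by fun_prop) (cs_of hs fun x hx => ?_)
    simp [fderiv_zero_of_not_mem hx]
  have hfd : ∀ x : E9, fderiv ℝ (fun x : E9 => x i) x (EuclideanSpace.single j 1)
      = if i = j then 1 else 0 := by
    intro x
    have : fderiv ℝ (fun x : E9 => x i) x = (EuclideanSpace.proj i : E9 →L[ℝ] ℝ) :=
      (EuclideanSpace.proj i : E9 →L[ℝ] ℝ).fderiv
    rw [this]
    simp
  have hci : Continuous (fun x : E9 => x i) := by fun_prop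
  have hdi : Differentiable ℝ (fun x : E9 => x i) :=
    (EuclideanSpace.proj i : E9 →L[ℝ] ℝ).differentiable
  have hGc := hG.continuous
  refine ⟨hi, ?_⟩
  rw [integral_mul_fderiv_eq_neg_fderiv_mul_of_integrable _ hi _ (fun x _ => hdi x)
    (fun x _ => hG.differentiable (by simp) x)]
  · simp_rw [hfd]
  · simp_rw [hfd]
    exact (hGc.integrable_of_hasCompactSupport hs).const_mul _
  · refine Continuous.integrable_of_hasCompactSupport (hci.mul hGc) (cs_of hs fun x hx => ?_)
    simp [image_eq_zero_of_notMem_tsupport hx]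

lemma int_LD (i j : Fin 9) {G : E9 → ℝ} (hG : ContDiff ℝ ∞ G) (hs : HasCompactSupport G) :
    ∫ x, LD (Aij i j) G x = 0 := by
  obtain ⟨h1, h2⟩ := int_coord i j hG hs
  obtain ⟨h3, h4⟩ := int_coord j i hG hs
  have : ∀ x, LD (Aij i j) G x = x i * fderiv ℝ G x (EuclideanSpace.single j 1)
      - x j * fderiv ℝ G x (EuclideanSpace.single i 1) := by
    intro x
    rw [LD, Aij_apply]
    simp
  simp_rw [this]
  rw [integral_sub h1 h3, h2, h4]
  simp [eq_comm]

lemma int_skew (i j : Fin 9) {F : E9 → ℝ} (hF : ContDiff ℝ ∞ F) (hs : HasCompactSupport F) :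
    ∫ x, (‖x‖ ^ 4)⁻¹ * LD (Aij i j) F x = 0 := by
  let w : ℕ → E9 → ℝ := fun n x => ((‖x‖ ^ 2 + 1 / ((n : ℝ) + 1)) ^ 2)⁻¹
  have hpos : ∀ n : ℕ, 0 < 1 / ((n : ℝ) + 1) := fun n => by positivity
  have hw : ∀ n, ContDiff ℝ ∞ (w n) := by
    intro n
    refine ContDiff.inv (((contDiff_norm_sq ℝ).add contDiff_const).pow 2) ?_
    intro x
    have := hpos n
    positivity
  have hw0 : ∀ n x, LD (Aij i j) (w n) x = 0 := by
    intro n x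
    have h1 : HasFDerivAt (fun x : E9 => ‖x‖ ^ 2) _ x := (hasStrictFDerivAt_norm_sq x).hasFDerivAt
    have h2 : HasDerivAt (fun t : ℝ => ((t + 1 / ((n : ℝ) + 1)) ^ 2)⁻¹) (deriv (fun t : ℝ => ((t + 1 / ((n : ℝ) + 1)) ^ 2)⁻¹) (‖x‖ ^ 2)) (‖x‖ ^ 2) := by
      apply DifferentiableAt.hasDerivAt
      have := hpos n
      refine DifferentiableAt.inv (by fun_prop) (by positivity)
    have h3 := h2.comp_hasFDerivAt x h1
    have h4 : fderiv ℝ (w n) x = _ := h3.fderiv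
    rw [LD, h4]
    simp [inner_Aij]
  have hz : ∀ n, ∫ x, w n x * LD (Aij i j) F x = 0 := by
    intro n
    have := int_LD i j ((hw n).mul hF) (hs.mul_left)
    rw [← this]
    congr 1
    funext x
    rw [LD_mul _ (hw n) hF, hw0]
    ring
  have hLc := (LD_smooth (Aij i j) hF).continuous
  have hlim : Tendsto (fun n => ∫ x, w n x * LD (Aij i j) F x) atTop
      (𝓝 (∫ x, (‖x‖ ^ 4)⁻¹ * LD (Aij i j) F x)) := by
    refine tendsto_integral_of_dominated_convergence
      (fun x => ‖(‖x‖ ^ 4)⁻¹ * LD (Aij i j) F x‖) ?_ ?_ ?_ ?_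
    · intro n
      exact ((hw n).continuous.mul hLc).aestronglyMeasurable
    · exact (int_w _ hLc (LD_cs _ hs)).norm
    · intro n
      refine .of_forall fun x => ?_
      by_cases hx : x = 0
      · simp [hx, LD]
      · have hx' : 0 < ‖x‖ := norm_pos_iff.2 hx
        have := hpos n
        rw [norm_mul, norm_mul]
        refine mul_le_mul_of_nonneg_right ?_ (norm_nonneg _)
        rw [Real.norm_of_nonneg (by positivity), Real.norm_of_nonneg (by positivity)]
        refine inv_anti₀ (by positivity) ?_
        nlinarith [mul_pos (pow_pos hx' 2) this]
    · refine .of_forall fun x => ?_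
      by_cases hx : x = 0
      · simp [hx, LD]
      · have hx' : 0 < ‖x‖ := norm_pos_iff.2 hx
        refine Tendsto.mul_const _ ?_
        have h1 := (tendsto_one_div_add_atTop_nhds_zero_nat (𝕜 := ℝ)).const_add (‖x‖ ^ 2)
        have h2 := (h1.pow 2).inv₀ (by positivity)
        convert h2 using 2
        ring
  simp_rw [hz] at hlim
  exact (tendsto_nhds_unique hlim tendsto_const_nhds)

lemma cross_nonneg {ρ : ℝ} (hρ0 : 0 < ρ) (i j : Fin 9) {u : E9 → ℝ} (hu : ContDiff ℝ ∞ u)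
    (hs : HasCompactSupport u) (hsub : tsupport u ⊆ ball 0 ρ) :
    Integrable (fun x => (‖x‖ ^ 4)⁻¹ * (Dop u x * LD (Aij i j) (LD (Aij i j) u) x)) ∧
    0 ≤ ∫ x, (‖x‖ ^ 4)⁻¹ * (Dop u x * LD (Aij i j) (LD (Aij i j) u) x) := by
  set A := Aij i j
  have hv := LD_smooth A hu
  have hvs := LD_cs A hs
  have hvv := LD_smooth A hv
  have hD := Dop_smooth hu
  have hint := int_w (fun x => Dop u x * LD A (LD A u) x) (hD.continuous.mul hvv.continuous)
    (cs_of hs fun x hx => by simp [Dop_zero hx])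
  refine ⟨hint, ?_⟩
  have h0 := int_skew i j (F := fun x => Dop u x * LD A u x) (hD.mul hv)
    (cs_of hs fun x hx => by simp [Dop_zero hx])
  have h1 := neg_Dop_nonneg hρ0 hv hvs ((LD_tsupp A u).trans hsub)
  have hint2 := int_w (fun x => -(Dop (LD A u) x * LD A u x))
    ((Dop_smooth hv).continuous.mul hv.continuous).neg
    (cs_of hvs fun x hx => by simp [Dop_zero hx])
  have e : ∀ x, (‖x‖ ^ 4)⁻¹ * LD (Aij i j) (fun x => Dop u x * LD A u x) x =
      (‖x‖ ^ 4)⁻¹ * (Dop u x * LD A (LD A u) x) - (‖x‖ ^ 4)⁻¹ * (-(Dop (LD A u) x * LD A u x)) := by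
    intro x
    rw [LD_mul _ hD hv, LD_Dop _ hu]
    ring
  simp_rw [e] at h0
  rw [integral_sub hint hint2] at h0
  linarith

lemma lap_eq {u : E9 → ℝ} (hu : ContDiff ℝ ∞ u) (x : E9) :
    lap u x = ∑ i, fderiv ℝ (fderiv ℝ u) x (EuclideanSpace.single i 1) (EuclideanSpace.single i 1) := by
  unfold lap
  refine Finset.sum_congr rfl fun i _ => ?_
  have := ((diff2 hu x).hasFDerivAt).clm_apply
    (hasFDerivAt_const (EuclideanSpace.single i (1 : ℝ)) x)
  rw [this.fderiv]
  simp

lemma lap_id {u : E9 → ℝ} (hu : ContDiff ℝ ∞ u) (x : E9) :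
    ∑ i, ∑ j, LD (Aij i j) (LD (Aij i j) u) x = 2 * (‖x‖ ^ 2 * lap u x - Dop u x) := by
  rw [lap_eq hu, Dop, LD_LD _ _ hu]
  set H := fderiv ℝ (fderiv ℝ u) x with hH
  set g := fderiv ℝ u x with hg
  let e : Fin 9 → E9 := fun i => EuclideanSpace.single i (1 : ℝ)
  have hsym : ∀ v w, H v w = H w v :=
    fun v w => (hu.contDiffAt.isSymmSndFDerivAt two_le_inf : IsSymmSndFDerivAt ℝ u x) v w
  have hx : x = ∑ i, x i • e i := by
    have := (EuclideanSpace.basisFun (Fin 9) ℝ).sum_repr x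
    simpa [e] using this.symm
  have hgx : g x = ∑ i, x i * g (e i) := by
    conv_lhs => rw [hx]
    simp
  have hHx : H x x = ∑ i, ∑ j, x i * x j * H (e i) (e j) := by
    have h1 : ∀ y, H x y = ∑ i, x i * H (e i) y := by
      intro y
      conv_lhs => rw [hx]
      simp
    have h2 : ∀ y, H y x = ∑ j, x j * H y (e j) := by
      intro y
      conv_lhs => rw [hx]
      simp
    rw [h1]
    refine Finset.sum_congr rfl fun i _ => ?_
    rw [h2, Finset.mul_sum]
    exact Finset.sum_congr rfl fun j _ => by ring
  have hn : ‖x‖ ^ 2 = ∑ i, x i ^ 2 := by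
    rw [EuclideanSpace.norm_sq_eq]; simp
  have ht : ∀ i j, LD (Aij i j) (LD (Aij i j) u) x =
      x i ^ 2 * H (e j) (e j) + x j ^ 2 * H (e i) (e i) - 2 * (x i * x j * H (e i) (e j))
      + 2 * (if i = j then x i * g (e i) else 0) - x i * g (e i) - x j * g (e j) := by
    intro i j
    rw [LD_LD _ _ hu, Aij_apply, Aij_apply]
    simp only [← hH, ← hg]
    change H (x i • e j - x j • e i) (x i • e j - x j • e i) + g (_ • e j - _ • e i) = _
    simp only [map_sub, map_smul, sub_apply, smul_apply,
      smul_eq_mul, hsym (e j) (e i)]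
    by_cases hij : i = j
    · subst hij
      simp
      ring
    · simp [hij, Ne.symm hij]
      ring
  simp_rw [ht]
  simp only [Finset.sum_add_distrib, Finset.sum_sub_distrib, ← Finset.mul_sum, ← Finset.sum_mul,
    Finset.sum_ite_eq, Finset.mem_univ, if_true, Finset.sum_const, Finset.card_univ,
    Fintype.card_fin, ← hHx, ← hgx, ← hn]
  simp [LD, ← hg, e, hn, hgx]
  ring_nf
  rw [← Finset.sum_mul]
  ring

lemma radial_main {ρ : ℝ} (hρ0 : 0 < ρ) (hρ : ρ < 1) {u : E9 → ℝ} (hu : ContDiff ℝ ∞ u)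
    (hs : HasCompactSupport u) (hsub : tsupport u ⊆ ball 0 ρ)
    (hi : Integrable fun x => Qfun ‖x‖ * (Pfun ‖x‖ + 8 / ‖x‖ ^ 2) * u x ^ 2) :
    ∫ x, Qfun ‖x‖ * (Pfun ‖x‖ + 8 / ‖x‖ ^ 2) * u x ^ 2 ≤ ∫ x, (‖x‖ ^ 4)⁻¹ * Dop u x ^ 2 := by
  have hi2 := int_w (fun x => Dop u x ^ 2) ((Dop_smooth hu).continuous.pow 2)
    (cs_of hs fun x hx => by simp [Dop_zero hx])
  rw [← sub_nonneg, ← integral_sub hi2 hi]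
  refine polar_ray hρ0 _ (hi2.sub hi) ?_ ?_
  · intro x hx
    have := not_mem_of_norm hsub hx
    simp [Dop_zero this, image_eq_zero_of_notMem_tsupport this]
  · intro z hz
    have hn := not_mem_of_norm hsub (norm_ray hz hρ0.le).ge
    obtain ⟨Φ, Φ', h1, h2, h3, h4, h5⟩ := ray_main hρ _ _ _ (ray_d1 hu z) (ray_d2 hu z)
      (image_eq_zero_of_notMem_tsupport hn) (by rw [fderiv_zero_of_not_mem hn]; rfl)
    refine ⟨Φ, Φ', h1, h2, h3, h4, fun r hr => (h5 r hr).trans_eq ?_⟩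
    have hr0 : r ≠ 0 := hr.1.ne'
    rw [norm_ray hz hr.1.le, ray_Dop hu]
    field_simp

/-- improved Hardy-Rellich inequality in dimension N = 9, for u ∈ C_c^∞(B). -/
theorem hardy_rellich_dim_nine
    (u : EuclideanSpace ℝ (Fin 9) → ℝ) (hu : ContDiff ℝ (⊤ : ℕ∞) u)
    (hsupp : HasCompactSupport u)
    (hsupp' : tsupport u ⊆ ball (0 : EuclideanSpace ℝ (Fin 9)) 1) :
    ∫ x in ball (0 : EuclideanSpace ℝ (Fin 9)) 1,
        Qfun ‖x‖ * (Pfun ‖x‖ + 8 / ‖x‖ ^ 2) * u x ^ 2 ≤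
      ∫ x in ball (0 : EuclideanSpace ℝ (Fin 9)) 1, (lap u x) ^ 2 := by
  obtain ⟨ρ, ⟨hρ0, hρ⟩, hsub⟩ := exists_pos_lt_subset_ball one_pos (isClosed_tsupport u) hsupp'
  have hlap0 : ∀ x, x ∉ tsupport u → lap u x = 0 := by
    intro x hx
    rw [lap_eq hu]
    have h1 : x ∉ tsupport (fderiv ℝ u) := fun h => hx (tsupport_fderiv_subset ℝ h)
    have h2 : fderiv ℝ (fderiv ℝ u) x = 0 :=
      image_eq_zero_of_notMem_tsupport fun h => h1 (tsupport_fderiv_subset ℝ h)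
    simp [h2]
  have hlapc : Continuous (lap u) := by
    have : lap u = fun x => ∑ i, fderiv ℝ (fderiv ℝ u) x (EuclideanSpace.single i 1)
        (EuclideanSpace.single i 1) := funext fun x => lap_eq hu x
    rw [this]
    have hc : Continuous (fderiv ℝ (fderiv ℝ u)) :=
      (hu.fderiv_right (m := ∞) (by simp)).continuous_fderiv (by simp)
    exact continuous_finsetSum _ fun i _ =>
      (hc.clm_apply continuous_const).clm_apply continuous_const
  have hli : Integrable fun x => lap u x ^ 2 :=
    (hlapc.pow 2).integrable_of_hasCompactSupport (cs_of hsupp fun x hx => by simp [hlap0 x hx])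
  rw [setIntegral_eq_integral_of_forall_compl_eq_zero, setIntegral_eq_integral_of_forall_compl_eq_zero]
  rotate_left
  · intro x hx
    rw [hlap0 x fun h => hx (hsupp' h)]; simp
  · intro x hx
    rw [image_eq_zero_of_notMem_tsupport fun h => hx (hsupp' h)]; simp
  by_cases hi : Integrable fun x : E9 => Qfun ‖x‖ * (Pfun ‖x‖ + 8 / ‖x‖ ^ 2) * u x ^ 2
  swap
  · rw [integral_undef hi]
    exact integral_nonneg fun x => sq_nonneg _
  refine (radial_main hρ0 hρ hu hsupp hsub hi).trans ?_
  have hi2 := int_w (fun x => Dop u x ^ 2) ((Dop_smooth hu).continuous.pow 2)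
    (cs_of hsupp fun x hx => by simp [Dop_zero hx])
  have hc := fun i j => cross_nonneg hρ0 i j hu hsupp hsub
  have hsi : Integrable fun x => ∑ i, ∑ j,
      (‖x‖ ^ 4)⁻¹ * (Dop u x * LD (Aij i j) (LD (Aij i j) u) x) :=
    integrable_finsetSum _ fun i _ => integrable_finsetSum _ fun j _ => (hc i j).1
  have hs0 : 0 ≤ ∫ x, ∑ i, ∑ j, (‖x‖ ^ 4)⁻¹ * (Dop u x * LD (Aij i j) (LD (Aij i j) u) x) := by
    rw [integral_finsetSum _ fun i _ => integrable_finsetSum _ fun j _ => (hc i j).1]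
    refine Finset.sum_nonneg fun i _ => ?_
    rw [integral_finsetSum _ fun j _ => (hc i j).1]
    exact Finset.sum_nonneg fun j _ => (hc i j).2
  have hmono : ∫ x, ((‖x‖ ^ 4)⁻¹ * Dop u x ^ 2 + ∑ i, ∑ j,
      (‖x‖ ^ 4)⁻¹ * (Dop u x * LD (Aij i j) (LD (Aij i j) u) x)) ≤ ∫ x, lap u x ^ 2 := by
    refine integral_mono (hi2.add hsi) hli fun x => ?_
    simp only [← Finset.mul_sum, lap_id hu]
    by_cases hx : x = 0
    · simp [hx]; positivity
    · have hx' : 0 < ‖x‖ := norm_pos_iff.2 hx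
      have e : (‖x‖ ^ 4)⁻¹ * Dop u x ^ 2 + (‖x‖ ^ 4)⁻¹ * (Dop u x * (2 * (‖x‖ ^ 2 * lap u x - Dop u x)))
        = lap u x ^ 2 - (lap u x - Dop u x / ‖x‖ ^ 2) ^ 2 := by
        field_simp; ring
      rw [e]
      linarith [sq_nonneg (lap u x - Dop u x / ‖x‖ ^ 2)]
  rw [integral_add hi2 hsi] at hmono
  linarith
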